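/- arXiv:2012.08609 — 3 statements merged into one kernel-verified Lean document; each statement's English description precedes it below -/
import Mathlib

section
/- Let A be a unital C*-algebra, let a ∈ A be self-adjoint, and let λ ∈ ℂ with Re λ > 0. Then the element iλ·1 − a is invertible in A and the resolvent is given by the absolutely convergent Bochner integral (iλ·1 − a)^{-1} = −i ∫_0^∞ e^{−uλ} exp(−i u a) du, where exp denotes the exponential in A. -/
open MeasureTheory

/-!
With `c = -(l • 1 + I • a)` the integrand is the one-parameter semigroup `u ↦ exp (u • c)`. Since
`exp (-(I * u) • a)` is unitary, `‖exp (u • c)‖ = exp (-u * re l) * ‖1‖` is integrable on `(0, ∞)`.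
The derivative `c * exp (u • c)` then has integral `0 - exp 0 = -1`, which makes `-∫ exp (u • c)`
the two-sided inverse of `c`, and `(I * l) • 1 - a = -I • c`.
-/

open Set Filter Topology

section BanachAlgebra

variable {A : Type*} [NormedRing A] [CompleteSpace A]

theorem exp_smul_exp_eq_exp_smul_one_add {𝕜 : Type*} [RCLike 𝕜] [NormedAlgebra 𝕜 A]
    (z : 𝕜) (x : A) :
    NormedSpace.exp z • NormedSpace.exp x = NormedSpace.exp (z • (1 : A) + x) := by
  let +nondep : NormedAlgebra ℚ A := .restrictScalars ℚ 𝕜 A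
  have commute_scalar : Commute (algebraMap 𝕜 A z) x := Algebra.commutes z x
  rw [Algebra.smul_def, NormedSpace.algebraMap_exp_comm, ← Algebra.algebraMap_eq_smul_one,
    NormedSpace.exp_add_of_commute commute_scalar]

variable [NormedAlgebra ℝ A] {c : A}

theorem tendsto_exp_smul_atTop_zero_of_integrableOn
    (hc : IntegrableOn (fun t : ℝ => NormedSpace.exp (t • c)) (Ioi 0)) :
    Tendsto (fun t : ℝ => NormedSpace.exp (t • c)) atTop (𝓝 0) :=
  tendsto_zero_of_hasDerivAt_of_integrableOn_Ioi
    (fun t _ => hasDerivAt_exp_smul_const c t) (hc.mul_const c) hc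

theorem integral_exp_smul_Ioi_mul_self
    (hc : IntegrableOn (fun t : ℝ => NormedSpace.exp (t • c)) (Ioi 0)) :
    (∫ t in Ioi (0 : ℝ), NormedSpace.exp (t • c)) * c = -1 := by
  rw [← integral_mul_const_of_integrable hc,
    integral_Ioi_of_hasDerivAt_of_tendsto' (fun t _ => hasDerivAt_exp_smul_const c t)
      (hc.mul_const c) (tendsto_exp_smul_atTop_zero_of_integrableOn hc),
    zero_smul, NormedSpace.exp_zero, zero_sub]

theorem self_mul_integral_exp_smul_Ioi
    (hc : IntegrableOn (fun t : ℝ => NormedSpace.exp (t • c)) (Ioi 0)) :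
    c * ∫ t in Ioi (0 : ℝ), NormedSpace.exp (t • c) = -1 := by
  rw [← integral_const_mul_of_integrable hc,
    integral_Ioi_of_hasDerivAt_of_tendsto' (fun t _ => hasDerivAt_exp_smul_const' c t)
      (hc.const_mul c) (tendsto_exp_smul_atTop_zero_of_integrableOn hc),
    zero_smul, NormedSpace.exp_zero, zero_sub]

end BanachAlgebra

section CStarAlgebra

variable {A : Type*} [NormedRing A] [StarRing A] [CStarRing A] [CompleteSpace A]

-- The value is `‖1‖` rather than `1` because `A` may be the zero ring.
theorem norm_exp_of_mem_skewAdjoint [NormedAlgebra ℚ A] {x : A} (hx : x ∈ skewAdjoint A) :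
    ‖NormedSpace.exp x‖ = ‖(1 : A)‖ := by
  simpa only [mul_one] using CStarRing.norm_mem_unitary_mul (1 : A)
    (NormedSpace.exp_mem_unitary_of_mem_skewAdjoint hx)

variable [NormedAlgebra ℂ A] [StarModule ℂ A] {x : A}

theorem norm_exp_smul_smul_one_add_of_mem_skewAdjoint (hx : x ∈ skewAdjoint A) (z : ℂ) (t : ℝ) :
    ‖NormedSpace.exp (t • (z • (1 : A) + x))‖ = Real.exp (z.re * t) * ‖(1 : A)‖ := by
  let +nondep : NormedAlgebra ℚ A := .restrictScalars ℚ ℂ A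
  rw [smul_add, ← smul_assoc, ← exp_smul_exp_eq_exp_smul_one_add, norm_smul,
    norm_exp_of_mem_skewAdjoint (skewAdjoint.smul_mem t hx), ← Complex.exp_eq_exp_ℂ,
    Complex.norm_exp, Complex.smul_re, smul_eq_mul, mul_comm t]

theorem integrableOn_exp_smul_smul_one_add_of_mem_skewAdjoint (hx : x ∈ skewAdjoint A) {z : ℂ}
    (hz : z.re < 0) :
    IntegrableOn (fun t : ℝ => NormedSpace.exp (t • (z • (1 : A) + x))) (Ioi 0) := by
  have continuous_semigroup : Continuous fun t : ℝ => NormedSpace.exp (t • (z • (1 : A) + x)) :=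
    (differentiable_exp_smul_const ℝ _).continuous
  exact ((integrableOn_exp_mul_Ioi hz 0).mul_const ‖(1 : A)‖).mono'
    continuous_semigroup.aestronglyMeasurable
    (.of_forall fun t => (norm_exp_smul_smul_one_add_of_mem_skewAdjoint hx z t).le)

end CStarAlgebra

/-- For a self-adjoint element `a` of a unital C*-algebra and `λ ∈ ℂ` with `Re λ > 0`,
the element `iλ·1 − a` is invertible and its inverse is given by the absolutely convergent
Bochner integral `−i ∫_0^∞ e^{−uλ} exp(−iua) du`. -/
theorem resolvent_as_laplace_transform
    {A : Type*} [NormedRing A] [StarRing A] [CStarRing A] [CompleteSpace A]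
    [NormedAlgebra ℂ A] [StarModule ℂ A]
    (a : A) (ha : IsSelfAdjoint a) (l : ℂ) (hl : 0 < l.re) :
    ∃ b : A,
      IntegrableOn
        (fun u : ℝ => Complex.exp (-(u : ℂ) * l) •
          NormedSpace.exp ((-(Complex.I * (u : ℂ))) • a))
        (Set.Ioi (0 : ℝ)) ∧
      b = (-Complex.I) • ∫ u in Set.Ioi (0 : ℝ),
            Complex.exp (-(u : ℂ) * l) •
              NormedSpace.exp ((-(Complex.I * (u : ℂ))) • a) ∧
      ((Complex.I * l) • (1 : A) - a) * b = 1 ∧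
      b * ((Complex.I * l) • (1 : A) - a) = 1 := by
  have integrand_eq (u : ℝ) :
      Complex.exp (-(u : ℂ) * l) • NormedSpace.exp ((-(Complex.I * (u : ℂ))) • a) =
        NormedSpace.exp (u • ((-l) • (1 : A) + (-Complex.I) • a)) := by
    rw [Complex.exp_eq_exp_ℂ, exp_smul_exp_eq_exp_smul_one_add, smul_add, ← smul_assoc,
      ← smul_assoc, Complex.real_smul, Complex.real_smul]
    ring_nf
  have factor : (Complex.I * l) • (1 : A) - a =
      (-Complex.I) • ((-l) • (1 : A) + (-Complex.I) • a) := by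
    simp [smul_add, smul_smul, sub_eq_add_neg]
  have skew : (-Complex.I) • a ∈ skewAdjoint A :=
    ha.smul_mem_skewAdjoint (by simp [skewAdjoint.mem_iff])
  have integrable := integrableOn_exp_smul_smul_one_add_of_mem_skewAdjoint skew
    (z := -l) (by simpa using hl)
  simp_rw [integrand_eq, factor]
  refine ⟨_, integrable, rfl, ?_, ?_⟩
  · rw [smul_mul_smul_comm, self_mul_integral_exp_smul_Ioi integrable]
    simp
  · rw [smul_mul_smul_comm, integral_exp_smul_Ioi_mul_self integrable]
    simp
end

section
/- Let s ≥ 1 and let h ∈ L¹(ℝ^s; ℂ). Then ∫_{ℝ^s} h(p) e^{i t |p|²} dp tends to 0 as t → ∞ (and likewise as t → −∞). -/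
open MeasureTheory Filter Topology

/-!
If a phase `φ` pulls null sets back to null sets, then for a finite measure `ν ≪ μ` the pushforward
`φ_* ν` has a Lebesgue density, so `∫ e^{itφ} dν` is the Fourier transform of an `L¹` function and
decays by the classical Riemann–Lebesgue lemma. Indicators give the statement for simple amplitudes,
and the uniform bound `‖∫ e^{itφ} h dμ‖ ≤ ‖h‖₁` extends it to all of `L¹`. The phase `‖p‖ⁿ` has this
property: in polar coordinates the radius has density `r ^ (dim - 1)`, and `r ↦ rⁿ` has nonzero
derivative off the origin.
-/

open scoped FourierTransform RealInnerProductSpace Real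

section CircleSMul

variable {X F : Type*} [MeasurableSpace X] {μ : Measure X} [NormedAddCommGroup F] [NormedSpace ℂ F]
  {c : X → Circle}

theorem integrable_circle_smul (hc : AEStronglyMeasurable c μ) {h : X → F}
    (hh : Integrable h μ) : Integrable (fun x ↦ c x • h x) μ :=
  hh.mono (hc.smul hh.1) (ae_of_all _ fun _ ↦ (Circle.norm_smul _ _).le)

theorem lipschitzWith_integral_circle_smul (hc : AEStronglyMeasurable c μ) :
    LipschitzWith 1 fun f : X →₁[μ] F ↦ ∫ x, c x • f x ∂μ := by
  refine LipschitzWith.mk_one fun f g ↦ ?_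
  have hf := integrable_circle_smul hc (L1.integrable_coeFn f)
  have hg := integrable_circle_smul hc (L1.integrable_coeFn g)
  calc
    dist (∫ x, c x • f x ∂μ) (∫ x, c x • g x ∂μ) = ‖∫ x, c x • (f x - g x) ∂μ‖ := by
      simp_rw [dist_eq_norm, ← integral_sub hf hg, smul_sub]
    _ ≤ ∫ x, ‖c x • (f x - g x)‖ ∂μ := norm_integral_le_integral_norm _
    _ = dist f g := by
      simp_rw [Circle.norm_smul, dist_eq_norm, L1.norm_eq_integral_norm]
      refine integral_congr_ae ?_
      filter_upwards [Lp.coeFn_sub f g] with x hx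
      rw [hx, Pi.sub_apply]

end CircleSMul

section RiemannLebesgue

variable {V F : Type*} [NormedAddCommGroup V] [InnerProductSpace ℝ V] [FiniteDimensional ℝ V]
  [MeasurableSpace V] [BorelSpace V] [NormedAddCommGroup F] [NormedSpace ℂ F]

theorem tendsto_integral_fourierChar_inner_smul_of_absolutelyContinuous
    {ν : Measure V} [SigmaFinite ν] (hν : ν ≪ volume) (f : V → F) :
    Tendsto (fun w : V ↦ ∫ v, 𝐞 (-⟪v, w⟫) • f v ∂ν) (cocompact V) (𝓝 0) := by
  refine (tendsto_integral_exp_inner_smul_cocompact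
    fun v ↦ (ν.rnDeriv volume v).toReal • f v).congr fun w ↦ ?_
  simp_rw [← integral_rnDeriv_smul hν, smul_comm (𝐞 _)]

variable {X : Type*} [MeasurableSpace X] {μ : Measure X} {h : X → F}

theorem tendsto_setIntegral_fourierChar_inner_smul_const {φ : X → V}
    (hφ : Measure.QuasiMeasurePreserving φ μ volume) {s : Set X} (hs : μ s ≠ ⊤) (y : F) :
    Tendsto (fun w : V ↦ ∫ x in s, 𝐞 (-⟪φ x, w⟫) • y ∂μ) (cocompact V) (𝓝 0) := by
  have : IsFiniteMeasure (μ.restrict s) := isFiniteMeasure_restrict.2 hs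
  have hac : (μ.restrict s).map φ ≪ volume :=
    (hφ.mono_left Measure.restrict_le_self.absolutelyContinuous).absolutelyContinuous
  refine (tendsto_integral_fourierChar_inner_smul_of_absolutelyContinuous hac fun _ ↦ y).congr
    fun w ↦ integral_map hφ.measurable.aemeasurable ?_
  exact Continuous.aestronglyMeasurable (by fun_prop)

theorem tendsto_integral_fourierChar_inner_smul_of_quasiMeasurePreserving {φ : X → V}
    (hφ : Measure.QuasiMeasurePreserving φ μ volume) (hh : Integrable h μ) :
    Tendsto (fun w : V ↦ ∫ x, 𝐞 (-⟪φ x, w⟫) • h x ∂μ) (cocompact V) (𝓝 0) := by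
  have hphase (w : V) : AEStronglyMeasurable (fun x ↦ 𝐞 (-⟪φ x, w⟫)) μ :=
    (by fun_prop : Continuous fun v : V ↦ 𝐞 (-⟪v, w⟫)).comp_aestronglyMeasurable
      hφ.measurable.aestronglyMeasurable
  refine Integrable.induction
    (fun h : X → F ↦ Tendsto (fun w : V ↦ ∫ x, 𝐞 (-⟪φ x, w⟫) • h x ∂μ) (cocompact V) (𝓝 0))
    ?indicator ?add ?closed ?ae hh
  case indicator =>
    intro y s hs hμs
    refine (tendsto_setIntegral_fourierChar_inner_smul_const hφ hμs.ne y).congr fun w ↦ ?_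
    rw [← integral_indicator hs]
    simp only [Set.indicator_smul_apply]
  case add =>
    intro f g _ hf hg hf0 hg0
    simpa only [Pi.add_apply, smul_add, add_zero, integral_add
      (integrable_circle_smul (hphase _) hf) (integrable_circle_smul (hphase _) hg)]
      using hf0.add hg0
  case closed =>
    have hequi := LipschitzWith.uniformEquicontinuous
      (fun (w : V) (f : X →₁[μ] F) ↦ ∫ x, 𝐞 (-⟪φ x, w⟫) • f x ∂μ) 1
      fun w ↦ lipschitzWith_integral_circle_smul (hphase w)
    exact hequi.equicontinuous.isClosed_setOfPred_tendsto continuous_const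
  case ae =>
    intro f g hfg _ hf0
    refine hf0.congr fun w ↦ integral_congr_ae ?_
    filter_upwards [hfg] with x hx
    rw [hx]

theorem coe_fourierChar_neg_inner_neg_inv_two_pi_mul (t r : ℝ) :
    (𝐞 (-⟪r, -(2 * π)⁻¹ * t⟫) : ℂ) = Complex.exp (Complex.I * t * r) := by
  have hangle : 2 * π * -⟪r, -(2 * π)⁻¹ * t⟫ = t * r := by
    rw [RCLike.inner_apply, conj_trivial]
    field_simp
  rw [Real.fourierChar_apply, hangle, Complex.ofReal_mul, mul_comm, mul_assoc]

theorem tendsto_integral_exp_smul_of_quasiMeasurePreserving {φ : X → ℝ}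
    (hφ : Measure.QuasiMeasurePreserving φ μ volume) (hh : Integrable h μ) :
    Tendsto (fun t : ℝ ↦ ∫ x, Complex.exp (Complex.I * t * φ x) • h x ∂μ) (cocompact ℝ) (𝓝 0) := by
  have hscale : Tendsto (fun t : ℝ ↦ -(2 * π)⁻¹ * t) (cocompact ℝ) (cocompact ℝ) :=
    (Homeomorph.mulLeft₀ _ (by simp [Real.pi_ne_zero])).isClosedEmbedding.tendsto_cocompact
  simpa only [Function.comp_def, Circle.smul_def, coe_fourierChar_neg_inner_neg_inv_two_pi_mul]
    using (tendsto_integral_fourierChar_inner_smul_of_quasiMeasurePreserving hφ hh).comp hscale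

end RiemannLebesgue

section QuasiMeasurePreserving

variable {E : Type*} [NormedAddCommGroup E] [NormedSpace ℝ E] [FiniteDimensional ℝ E]

theorem exists_isOpen_injOn_of_hasStrictFDerivAt {f : E → E} {f' : E →L[ℝ] E} {x : E}
    (hf : HasStrictFDerivAt f f' x) (hdet : f'.det ≠ 0) :
    ∃ U, x ∈ U ∧ IsOpen U ∧ Set.InjOn f U := by
  have hequiv : HasStrictFDerivAt f (f'.toContinuousLinearEquivOfDetNeZero hdet : E →L[ℝ] E) x :=
    hf
  exact ⟨_, hequiv.mem_toOpenPartialHomeomorph_source,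
    (hequiv.toOpenPartialHomeomorph f).open_source, (hequiv.toOpenPartialHomeomorph f).injOn⟩

variable [MeasurableSpace E] [BorelSpace E] {μ : Measure E} [μ.IsAddHaarMeasure]

theorem measure_eq_zero_of_measure_image_eq_zero_of_det_ne_zero
    {f : E → E} {f' : E → E →L[ℝ] E} {s : Set E}
    (hs : MeasurableSet s) (hf' : ∀ x ∈ s, HasFDerivWithinAt f (f' x) s x) (hf : Set.InjOn f s)
    (hdet : ∀ x ∈ s, (f' x).det ≠ 0) (himage : μ (f '' s) = 0) : μ s = 0 := by
  have hmeas : AEMeasurable (fun x ↦ ENNReal.ofReal |(f' x).det|) (μ.restrict s) :=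
    aemeasurable_ofReal_abs_det_fderivWithin μ hs hf'
  rw [← lintegral_abs_det_fderiv_eq_addHaar_image μ hs hf' hf, lintegral_eq_zero_iff' hmeas,
    EventuallyEq, ae_restrict_iff' hs] at himage
  refine measure_eq_zero_iff_ae_notMem.2 (himage.mono fun x hx hxs ↦ hdet x hxs ?_)
  simpa using hx hxs

theorem quasiMeasurePreserving_of_ae_hasStrictFDerivAt {f : E → E} {f' : E → E →L[ℝ] E}
    (hf : Measurable f) (hf' : ∀ᵐ x ∂μ, HasStrictFDerivAt f (f' x) x)
    (hdet : ∀ᵐ x ∂μ, (f' x).det ≠ 0) : Measure.QuasiMeasurePreserving f μ μ := by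
  refine ⟨hf, Measure.AbsolutelyContinuous.mk fun N hN hN0 ↦ ?_⟩
  rw [Measure.map_apply hf hN]
  obtain ⟨G, hGae, hG, hGreg⟩ := (hf'.and hdet).exists_measurable_mem
  rw [← Measure.measure_inter_eq_of_ae hGae]
  refine measure_null_of_locally_null _ fun x hx ↦ ?_
  obtain ⟨U, hxU, hU, hinj⟩ :=
    exists_isOpen_injOn_of_hasStrictFDerivAt (hGreg x hx.1).1 (hGreg x hx.1).2
  refine ⟨_, inter_mem_nhdsWithin _ (hU.mem_nhds hxU), ?_⟩
  apply measure_eq_zero_of_measure_image_eq_zero_of_det_ne_zero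
    ((hG.inter (hf hN)).inter hU.measurableSet)
    (fun y hy ↦ (hGreg y hy.1.1).1.hasFDerivAt.hasFDerivWithinAt)
    (hinj.mono Set.inter_subset_right) (fun y hy ↦ (hGreg y hy.1.1).2)
  exact measure_mono_null (Set.image_subset_iff.2 fun y hy ↦ hy.1.2) hN0

theorem quasiMeasurePreserving_pow {n : ℕ} (hn : n ≠ 0) :
    Measure.QuasiMeasurePreserving (fun r : ℝ ↦ r ^ n) := by
  refine quasiMeasurePreserving_of_ae_hasStrictFDerivAt (by fun_prop)
    (ae_of_all _ fun r ↦ (hasStrictDerivAt_pow n r).hasStrictFDerivAt) ?_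
  filter_upwards [Measure.ae_ne volume (0 : ℝ)] with r hr
  simp [hn, hr]

theorem quasiMeasurePreserving_coe_volumeIoiPow (n : ℕ) :
    Measure.QuasiMeasurePreserving ((↑) : Set.Ioi (0 : ℝ) → ℝ) (Measure.volumeIoiPow n) := by
  refine .mono_left ⟨measurable_subtype_coe, ?_⟩ (withDensity_absolutelyContinuous _ _)
  rw [map_comap_subtype_coe measurableSet_Ioi]
  exact Measure.restrict_le_self.absolutelyContinuous

theorem quasiMeasurePreserving_norm [Nontrivial E] :
    Measure.QuasiMeasurePreserving (fun x : E ↦ ‖x‖) μ volume := by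
  have hpolar : Measure.QuasiMeasurePreserving (fun x : ({0}ᶜ : Set E) ↦ ‖(x : E)‖)
      (μ.comap (↑)) volume := by
    simpa [Function.comp_def] using
      (quasiMeasurePreserving_coe_volumeIoiPow _).comp <| Measure.quasiMeasurePreserving_snd.comp
        μ.measurePreserving_homeomorphUnitSphereProd.quasiMeasurePreserving
  refine ⟨measurable_norm, ?_⟩
  rw [← restrict_compl_singleton (μ := μ) 0,
    ← map_comap_subtype_coe (measurableSet_singleton _).compl,
    Measure.map_map measurable_norm measurable_subtype_coe]
  exact hpolar.absolutelyContinuous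

end QuasiMeasurePreserving

theorem riemann_lebesgue_quadratic_dispersion_general {E F : Type*}
    [NormedAddCommGroup E] [NormedSpace ℝ E] [FiniteDimensional ℝ E] [Nontrivial E]
    [MeasurableSpace E] [BorelSpace E] [NormedAddCommGroup F] [NormedSpace ℂ F]
    [CompleteSpace F] {μ : Measure E} [μ.IsAddHaarMeasure] {n : ℕ} (hn : n ≠ 0)
    {h : E → F} (hh : Integrable h μ) :
    Tendsto (fun t : ℝ ↦ ∫ p, Complex.exp (Complex.I * t * (‖p‖ ^ n : ℝ)) • h p ∂μ)
      (cocompact ℝ) (𝓝 0) :=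
  tendsto_integral_exp_smul_of_quasiMeasurePreserving
    ((quasiMeasurePreserving_pow hn).comp quasiMeasurePreserving_norm) hh

/-- Riemann–Lebesgue-type decay for the free quadratic dispersion: for `h ∈ L¹(ℝ^s; ℂ)`,
the integral `∫ h(p) e^{it|p|²} dp` tends to `0` as `t → ∞` and as `t → −∞`. -/
theorem riemann_lebesgue_quadratic_dispersion
    (s : ℕ) (hs : 1 ≤ s)
    (h : EuclideanSpace ℝ (Fin s) → ℂ) (hint : Integrable h) :
    Tendsto
      (fun t : ℝ => ∫ p : EuclideanSpace ℝ (Fin s),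
        h p * Complex.exp (Complex.I * (t : ℂ) * ((‖p‖ ^ 2 : ℝ) : ℂ)))
      atTop (𝓝 0) ∧
    Tendsto
      (fun t : ℝ => ∫ p : EuclideanSpace ℝ (Fin s),
        h p * Complex.exp (Complex.I * (t : ℂ) * ((‖p‖ ^ 2 : ℝ) : ℂ)))
      atBot (𝓝 0) := by
  have : NeZero s := ⟨Nat.one_le_iff_ne_zero.1 hs⟩
  simpa only [cocompact_eq_atBot_atTop, tendsto_sup, and_comm, smul_eq_mul, mul_comm (h _)] using
    riemann_lebesgue_quadratic_dispersion_general two_ne_zero hint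
end

section
/- Let s ∈ {1, 2} and let f ∈ L¹(ℝ^s; ℂ) ∩ L²(ℝ^s; ℂ). If ∫_{ℝ^s} |f̂(p)|² |p|^{-2} dp < ∞, where f̂ denotes the Fourier transform of f, then ∫_{ℝ^s} f(x) dx = 0, i.e. f̂(0) = 0. -/
open MeasureTheory

/-!
If `f̂(0) = ∫ f` were nonzero, then by continuity `|f̂|` would be bounded below near the origin, so
the weighted integral would dominate a multiple of `∫_{|p| < r} |p|⁻² dp`. In polar coordinates this
is a multiple of `∫₀^r t^(s - 3) dt`, which diverges for `s ≤ 2`.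
-/

section NormRpow

open Metric Module

variable {E : Type*} [NormedAddCommGroup E] [NormedSpace ℝ E] [FiniteDimensional ℝ E]
  [Nontrivial E] [MeasurableSpace E] [BorelSpace E] {μ : Measure E} [μ.IsAddHaarMeasure] {a r : ℝ}

theorem integrableOn_ball_norm_rpow_iff (hr : 0 < r) :
    IntegrableOn (fun x : E ↦ ‖x‖ ^ a) (ball 0 r) μ ↔ -(finrank ℝ E : ℝ) < a := by
  have radial_integrand : Set.EqOn (fun t : ℝ ↦ t ^ (finrank ℝ E - 1) • t ^ a)
      (fun t ↦ t ^ ((finrank ℝ E : ℝ) - 1 + a)) (Set.Ioo 0 r) := fun t ht ↦ by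
    simp only [smul_eq_mul]
    rw [Real.rpow_add ht.1, ← Nat.cast_pred finrank_pos, Real.rpow_natCast]
  calc IntegrableOn (fun x : E ↦ ‖x‖ ^ a) (ball 0 r) μ
      ↔ IntegrableOn (fun t : ℝ ↦ t ^ (finrank ℝ E - 1) • t ^ a) (Set.Ioo 0 r) :=
        integrableOn_fun_norm_addHaar μ (f := (· ^ a))
    _ ↔ IntegrableOn (fun t : ℝ ↦ t ^ ((finrank ℝ E : ℝ) - 1 + a)) (Set.Ioo 0 r) :=
        integrableOn_congr_fun radial_integrand measurableSet_Ioo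
    _ ↔ -1 < (finrank ℝ E : ℝ) - 1 + a := intervalIntegral.integrableOn_Ioo_rpow_iff hr
    _ ↔ -(finrank ℝ E : ℝ) < a := by constructor <;> intro h <;> linarith

theorem setLIntegral_ball_norm_rpow_eq_top (hr : 0 < r) (ha : a ≤ -(finrank ℝ E : ℝ)) :
    ∫⁻ x in ball (0 : E) r, ENNReal.ofReal (‖x‖ ^ a) ∂μ = ⊤ := by
  by_contra h_finite
  refine ha.not_gt ((integrableOn_ball_norm_rpow_iff (μ := μ) hr).1 ?_)
  have h_meas : Measurable fun x : E ↦ ‖x‖ ^ a := by fun_prop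
  exact (lintegral_ofReal_ne_top_iff_integrable h_meas.aestronglyMeasurable
    (.of_forall fun x ↦ by positivity)).1 h_finite

theorem nonpos_of_lintegral_mul_norm_rpow_ne_top {g : E → ℝ} (hg : ContinuousAt g 0)
    (ha : a ≤ -(finrank ℝ E : ℝ))
    (h : ∫⁻ x, ENNReal.ofReal (g x * ‖x‖ ^ a) ∂μ ≠ ⊤) : g 0 ≤ 0 := by
  by_contra! h_pos
  obtain ⟨c, hc, hcg⟩ := exists_between h_pos
  obtain ⟨r, hr, h_ball⟩ := eventually_nhds_iff_ball.1 (hg.eventually (lt_mem_nhds hcg))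
  refine h (top_unique ?_)
  calc ⊤ = ENNReal.ofReal c * ∫⁻ x in ball (0 : E) r, ENNReal.ofReal (‖x‖ ^ a) ∂μ := by
        rw [setLIntegral_ball_norm_rpow_eq_top hr ha, ENNReal.mul_top (by simpa using hc)]
    _ = ∫⁻ x in ball (0 : E) r, ENNReal.ofReal (c * ‖x‖ ^ a) ∂μ := by
        simp only [ENNReal.ofReal_mul hc.le, lintegral_const_mul' _ _ ENNReal.ofReal_ne_top]
    _ ≤ ∫⁻ x in ball (0 : E) r, ENNReal.ofReal (g x * ‖x‖ ^ a) ∂μ :=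
        setLIntegral_mono' measurableSet_ball fun x hx ↦ by
          have := h_ball x hx
          gcongr
    _ ≤ ∫⁻ x, ENNReal.ofReal (g x * ‖x‖ ^ a) ∂μ := setLIntegral_le_lintegral _ _

end NormRpow

section Fourier

open Module
open scoped FourierTransform

variable {V E : Type*} [NormedAddCommGroup V] [InnerProductSpace ℝ V] [FiniteDimensional ℝ V]
  [MeasurableSpace V] [BorelSpace V] [NormedAddCommGroup E] [NormedSpace ℂ E] {f : V → E}

theorem continuous_fourier_of_integrable (hf : Integrable f) : Continuous (𝓕 f) :=
  VectorFourier.fourierIntegral_continuous Real.continuous_fourierChar continuous_inner hf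

theorem fourier_apply_zero (f : V → E) : 𝓕 f 0 = ∫ x, f x := by
  simp [Real.fourier_eq]

theorem low_dim_domain_implies_zero_mean_general [Nontrivial V] [CompleteSpace E] {q a : ℝ}
    (hq : 0 < q) (ha : a ≤ -(finrank ℝ V : ℝ)) (hf : Integrable f)
    (hdom : ∫⁻ p, ENNReal.ofReal (‖𝓕 f p‖ ^ q * ‖p‖ ^ a) < ⊤) : ∫ x, f x = 0 := by
  have h_cont : Continuous fun p ↦ ‖𝓕 f p‖ ^ q :=
    (continuous_fourier_of_integrable hf).norm.rpow_const fun _ ↦ .inr hq.le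
  have h_zero : ‖𝓕 f 0‖ ^ q ≤ 0 :=
    nonpos_of_lintegral_mul_norm_rpow_ne_top h_cont.continuousAt ha hdom.ne
  rw [← fourier_apply_zero, ← norm_le_zero_iff]
  contrapose! h_zero
  positivity

end Fourier

/-- In dimensions `s = 1, 2`: if `f ∈ L¹ ∩ L²` and its Fourier transform lies in the domain
of `|P|⁻¹`, i.e. `∫ |f̂(p)|² |p|⁻² dp < ∞`, then `f` has vanishing mean, `∫ f = 0`. -/
theorem low_dim_domain_implies_zero_mean
    (s : ℕ) (hs : s = 1 ∨ s = 2)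
    (f : EuclideanSpace ℝ (Fin s) → ℂ)
    (hf1 : Integrable f)
    (hf2 : MemLp f 2 (volume : Measure (EuclideanSpace ℝ (Fin s))))
    (hdom : (∫⁻ p : EuclideanSpace ℝ (Fin s),
        ENNReal.ofReal (‖FourierTransform.fourier f p‖ ^ 2 * (‖p‖ ^ 2)⁻¹)) < ⊤) :
    ∫ x : EuclideanSpace ℝ (Fin s), f x = 0 := by
  rcases hs with rfl | rfl <;>
    exact low_dim_domain_implies_zero_mean_general (q := 2) (a := -2) two_pos (by simp) hf1
      (by simpa [Real.rpow_neg] using hdom)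
end
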